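/- Let n ≥ 2 and let T = {1,…,n} or T = {1,…,n−1}. Then all of the following hold: (i) the top row (p_{n,0}^{∅⊆T∖{1}}, p_{n,1}^{∅⊆T∖{1}}, …, p_{n,n}^{∅⊆T∖{1}}) is an interlacing sequence; (ii) the middle row (p_{n,0}^{∅⊆T}, p_{n,1}^{∅⊆T}, …, p_{n,n}^{∅⊆T}) is an interlacing sequence; (iii) the bottom row (p_{n,0}^{{1}⊆T}, p_{n,1}^{{1}⊆T}, …, p_{n,n}^{{1}⊆T}) is an interlacing sequence; (iv) for every 0 ≤ k ≤ n, the column (p_{n,k}^{∅⊆T∖{1}}, p_{n,k}^{∅⊆T}, p_{n,k}^{{1}⊆T}) is an interlacing sequence; and (v) p_{n,n−1}^{∅⊆T∖{1}} ⪯ p_{n,1}^{{1}⊆T}, so that the concatenated sequence (p_{n,0}^{∅⊆T∖{1}}, …, p_{n,n−1}^{∅⊆T∖{1}}, p_{n,1}^{{1}⊆T}, …, p_{n,n}^{{1}⊆T}) is an interlacing sequence. -/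

import Mathlib

open Polynomial

noncomputable section

/-- A real polynomial is *real-rooted* if all of its complex roots are real.
(The zero polynomial is real-rooted by convention.) -/
def RealRooted (f : Polynomial ℝ) : Prop :=
  ∀ z ∈ (f.map (algebraMap ℝ ℂ)).roots, z.im = 0

/-- All coefficients of the polynomial are nonnegative. -/
def NonnegCoeffs (f : Polynomial ℝ) : Prop := ∀ i, 0 ≤ f.coeff i

/-- The list of real roots of `f`, with multiplicity, in weakly decreasing order. -/
def descRoots (f : Polynomial ℝ) : List ℝ := (f.roots.sort (· ≤ ·)).reverse

/-- The interlacing condition on the weakly decreasing root sequences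
`α` of `f` and `β` of `g` : `β₁ ≥ α₁ ≥ β₂ ≥ α₂ ≥ …`, together with the
degree condition `deg g ∈ {deg f, deg f + 1}`. -/
def InterlacesAux (f g : Polynomial ℝ) : Prop :=
  (g.natDegree = f.natDegree ∨ g.natDegree = f.natDegree + 1) ∧
  (∀ (i : ℕ) (hf : i < (descRoots f).length) (hg : i < (descRoots g).length),
      (descRoots f).get ⟨i, hf⟩ ≤ (descRoots g).get ⟨i, hg⟩) ∧
  (∀ (i : ℕ) (hf : i < (descRoots f).length) (hg : i + 1 < (descRoots g).length),
      (descRoots g).get ⟨i + 1, hg⟩ ≤ (descRoots f).get ⟨i, hf⟩)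

/-- `f ⪯ g` : `f` interlaces `g`.  Both polynomials are required to be real-rooted;
by convention `0 ⪯ 0`, `0 ⪯ f`, `f ⪯ 0`, and any two polynomials of degree at most 1
interlace. -/
def Interlaces (f g : Polynomial ℝ) : Prop :=
  RealRooted f ∧ RealRooted g ∧
  (f = 0 ∨ g = 0 ∨ (f.natDegree ≤ 1 ∧ g.natDegree ≤ 1) ∨ InterlacesAux f g)

/-- A finite family of real-rooted polynomials is an interlacing sequence if
`F i ⪯ F j` for all `i < j`. -/
def InterlacingSeq {n : ℕ} (F : Fin n → Polynomial ℝ) : Prop :=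
  ∀ i j : Fin n, i < j → Interlaces (F i) (F j)

/-- A polynomial of degree `d` is palindromic if `coeff i = coeff (d - i)` for all `i ≤ d`. -/
def Palindromic (f : Polynomial ℝ) : Prop :=
  ∀ i ≤ f.natDegree, f.coeff i = f.coeff (f.natDegree - i)

/-- A set `S ⊆ ℕ` is isolated if `i ∈ S` implies `i + 1 ∉ S`. -/
def IsolatedSet (S : Finset ℕ) : Prop := ∀ i ∈ S, i + 1 ∉ S

instance : DecidablePred IsolatedSet := fun S =>
  decidable_of_iff (∀ i ∈ S, i + 1 ∉ S) Iff.rfl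

/-- The descent set of a permutation `w` of `{1, …, n+1}` (encoded as a permutation of
`Fin (n+1)`), as a subset of `{1, …, n}` : `Des(w) = {i ∈ {1,…,n} : w(i) > w(i+1)}`. -/
def desSet {n : ℕ} (w : Equiv.Perm (Fin (n + 1))) : Finset ℕ :=
  (Finset.univ.filter (fun i : Fin n => w i.succ < w i.castSucc)).image
    (fun i => i.val + 1)

/-- The polynomial `p_{n,k}^{S ⊆ T}(x) = Σ x^{des(w)}`, the sum over all permutations `w`
of `{1, …, n+1}` with `w(1) = k + 1`, `Des(w)` isolated and `S ⊆ Des(w) ⊆ T`. -/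
def pPoly (n k : ℕ) (S T : Finset ℕ) : Polynomial ℝ :=
  ∑ w ∈ Finset.univ.filter (fun w : Equiv.Perm (Fin (n + 1)) =>
      (w 0 : ℕ) = k ∧ IsolatedSet (desSet w) ∧ S ⊆ desSet w ∧ desSet w ⊆ T),
    Polynomial.X ^ (desSet w).card

/-- The shifted set `S - 1 = {i - 1 : i ∈ S} ∩ {1, …, n-1}`. -/
def shiftDown (n : ℕ) (S : Finset ℕ) : Finset ℕ :=
  (S.image (fun i => i - 1)) ∩ Finset.Icc 1 (n - 1)

section Poset

variable (P : Type*) [Fintype P] [PartialOrder P] [OrderBot P]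

/-- A finite poset `P` with a minimum is simplicial of rank `n` if for every maximal
element `m` the interval `[⊥, m]` is order-isomorphic to the boolean lattice of
subsets of an `n`-element set. -/
def SimplicialOfRank (n : ℕ) : Prop :=
  ∀ m : P, IsMax m → Nonempty ((Set.Icc (⊥ : P) m) ≃o Finset (Fin n))

variable {P}

/-- `rk` is a rank function: `rk ⊥ = 0` and ranks increase by one along covers. -/
def IsRankFunction (rk : P → ℕ) : Prop :=
  rk ⊥ = 0 ∧ ∀ a b : P, a ⋖ b → rk b = rk a + 1

/-- `f_{i-1}` : the number of elements of `P` of rank `i`. -/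
def fvec (rk : P → ℕ) (i : ℕ) : ℕ := (Finset.univ.filter (fun x => rk x = i)).card

/-- The generating polynomial `Σ_{i=0}^n h_i x^i = Σ_{i=0}^n f_{i-1} x^i (1-x)^{n-i}`
of the h-vector of `P`. -/
def hPoly (rk : P → ℕ) (n : ℕ) : Polynomial ℤ :=
  ∑ i ∈ Finset.range (n + 1),
    Polynomial.C (fvec rk i : ℤ) * Polynomial.X ^ i * (1 - Polynomial.X) ^ (n - i)

/-- The h-vector entry `h_k` of `P`. -/
def hvec (rk : P → ℕ) (n k : ℕ) : ℤ := (hPoly rk n).coeff k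

/-- The flag f-vector `α_{P̂}(T)` : the number of chains in `P̂ ∖ {0̂, 1̂} = P ∖ {⊥}`
whose set of ranks is exactly `T`. -/
def flagF (rk : P → ℕ) (T : Finset ℕ) : ℕ :=
  Nat.card {c : Finset P // IsChain (· ≤ ·) (c : Set P) ∧ (⊥ : P) ∉ c ∧ c.image rk = T}

/-- The flag h-vector `β_{P̂}(S) = Σ_{T ⊆ S} (-1)^{|S ∖ T|} α_{P̂}(T)`. -/
def flagH (rk : P → ℕ) (S : Finset ℕ) : ℤ :=
  ∑ T ∈ S.powerset, (-1) ^ ((S \ T).card) * (flagF rk T : ℤ)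

/-- The flag h-vector of the dual poset `P̂*` : `β_{P̂*}(S) = β_{P̂}({n+1-s : s ∈ S})`. -/
def flagHDual (rk : P → ℕ) (n : ℕ) (S : Finset ℕ) : ℤ :=
  flagH rk (S.image (fun s => n + 1 - s))

/-- The Chow polynomial
`H_{P̂}(x) = Σ_{S ⊆ {2,…,n} isolated} β_{P̂}(S) x^{|S|} (1+x)^{n-2|S|}`. -/
def chowPoly (rk : P → ℕ) (n : ℕ) : Polynomial ℝ :=
  ∑ S ∈ (Finset.Icc 2 n).powerset.filter IsolatedSet,
    (flagH rk S : ℝ) • (Polynomial.X ^ S.card * (1 + Polynomial.X) ^ (n - 2 * S.card))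

/-- The augmented Chow polynomial
`H^aug_{P̂}(x) = Σ_{S ⊆ {1,…,n} isolated} β_{P̂}(S) x^{|S|} (1+x)^{n+1-2|S|}`. -/
def chowAugPoly (rk : P → ℕ) (n : ℕ) : Polynomial ℝ :=
  ∑ S ∈ (Finset.Icc 1 n).powerset.filter IsolatedSet,
    (flagH rk S : ℝ) • (Polynomial.X ^ S.card * (1 + Polynomial.X) ^ (n + 1 - 2 * S.card))

/-- The Chow polynomial of the dual poset `P̂*`. -/
def chowDualPoly (rk : P → ℕ) (n : ℕ) : Polynomial ℝ :=
  ∑ S ∈ (Finset.Icc 2 n).powerset.filter IsolatedSet,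
    (flagHDual rk n S : ℝ) • (Polynomial.X ^ S.card * (1 + Polynomial.X) ^ (n - 2 * S.card))

/-- The augmented Chow polynomial of the dual poset `P̂*`. -/
def chowAugDualPoly (rk : P → ℕ) (n : ℕ) : Polynomial ℝ :=
  ∑ S ∈ (Finset.Icc 1 n).powerset.filter IsolatedSet,
    (flagHDual rk n S : ℝ) • (Polynomial.X ^ S.card * (1 + Polynomial.X) ^ (n + 1 - 2 * S.card))

end Poset

end

/-!
Delete the first letter of a permutation counted by `p_{n,k}`. If the second letter is larger than
the first, what remains is counted by the middle row of rank `n - 1` for the shifted set `T - 1`;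
otherwise `1` is a descent, hence `2` is not, and what remains is counted by the top row. So
`top_k = ∑_{j ≥ k} mid_j`, and `bot_k = x ∑_{j < k} top_j` if `1 ∈ T` and `bot_k = 0` if not.

To carry interlacing through this recursion, `f ⪯ g` is replaced by the condition that `g / f`
maps the upper half-plane into the sector spanned by `1` and `z`. This condition is preserved by
sums in either argument, and it passes from `(f, g)` to `(g, x f)`, so the recursion preserves it.

To return to interlacing, follow `arg (g / f)`, continued along horizontal lines in the upper
half-plane from its value `0` at `+∞`. The sector condition confines it to `[0, π]`. As the line
descends to the real axis, `arg f` at `t` tends to `π` times the number of roots of `f` beyond `t`.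
So beyond every `t` the polynomial `g` has as many roots as `f`, or exactly one more, which is
interlacing.
-/

section SectorInterlaces

open ComplexConjugate

/-- The relation used in place of `Interlaces`: on the upper half-plane, `g / f` takes values in the
closed sector spanned by `1` and `z`. Clearing denominators makes the condition additive in `f` and
in `g` separately and makes every polynomial related to `0`. For real-rooted polynomials with
nonnegative leading coefficients it implies interlacing. -/
def SectorInterlaces (f g : ℝ[X]) : Prop :=
  ∀ z : ℂ, 0 < z.im →
    0 ≤ (aeval z g * conj (aeval z f)).im ∧ 0 ≤ (z * aeval z f * conj (aeval z g)).im

namespace SectorInterlaces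

variable {f g h : ℝ[X]}

lemma zero_left (f : ℝ[X]) : SectorInterlaces 0 f := fun z _ ↦ by simp

lemma zero_right (f : ℝ[X]) : SectorInterlaces f 0 := fun z _ ↦ by simp

lemma refl (f : ℝ[X]) : SectorInterlaces f f := by
  refine fun z hz ↦ ⟨by rw [Complex.mul_conj, Complex.ofReal_im], ?_⟩
  rw [mul_assoc, Complex.mul_conj, Complex.im_mul_ofReal]
  exact mul_nonneg hz.le (Complex.normSq_nonneg _)

lemma add_left (hf : SectorInterlaces f h) (hg : SectorInterlaces g h) :
    SectorInterlaces (f + g) h := fun z hz ↦ by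
  simp only [map_add, mul_add, add_mul, Complex.add_im]
  exact ⟨add_nonneg (hf z hz).1 (hg z hz).1, add_nonneg (hf z hz).2 (hg z hz).2⟩

lemma add_right (hf : SectorInterlaces h f) (hg : SectorInterlaces h g) :
    SectorInterlaces h (f + g) := fun z hz ↦ by
  simp only [map_add, mul_add, add_mul, Complex.add_im]
  exact ⟨add_nonneg (hf z hz).1 (hg z hz).1, add_nonneg (hf z hz).2 (hg z hz).2⟩

lemma sum_sum {ι κ : Type*} {s : Finset ι} {t : Finset κ} {f : ι → ℝ[X]} {g : κ → ℝ[X]}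
    (h : ∀ i ∈ s, ∀ j ∈ t, SectorInterlaces (f i) (g j)) :
    SectorInterlaces (∑ i ∈ s, f i) (∑ j ∈ t, g j) :=
  Finset.sum_induction f (SectorInterlaces · _) (fun _ _ ↦ add_left) (zero_left _) fun i hi ↦
    Finset.sum_induction g (SectorInterlaces (f i) ·) (fun _ _ ↦ add_right) (zero_right _) (h i hi)

/-- If `g / f` lies between `1` and `z`, then so does `z f / g`. -/
lemma X_mul_right (h : SectorInterlaces f g) : SectorInterlaces g (X * f) := fun z hz ↦ by
  have heval : aeval z (X * f) = z * aeval z f := by rw [map_mul, aeval_X]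
  have hnorm : z * aeval z g * conj (z * aeval z f) =
      (Complex.normSq z : ℂ) * (aeval z g * conj (aeval z f)) := by
    rw [← Complex.mul_conj, map_mul]
    ring
  rw [heval, hnorm, Complex.im_ofReal_mul]
  exact ⟨(h z hz).2, mul_nonneg (Complex.normSq_nonneg _) (h z hz).1⟩

lemma X_mul_X_mul (h : SectorInterlaces f g) : SectorInterlaces (X * f) (X * g) :=
  h.X_mul_right.X_mul_right

/-- If `A, B, M, N` is an interlacing sequence, then so is `M, N, X * A, X * B`, and the two sides
are sums over consecutive windows of it. -/
lemma add_X_mul_add_X_mul {A B M N : ℝ[X]} (hAB : SectorInterlaces A B)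
    (hAM : SectorInterlaces A M) (hBM : SectorInterlaces B M) (hBN : SectorInterlaces B N)
    (hMN : SectorInterlaces M N) : SectorInterlaces (M + N + X * A) (N + X * (A + B)) := by
  have hleft : SectorInterlaces M (N + X * A + X * B) :=
    (hMN.add_right hAM.X_mul_right).add_right hBM.X_mul_right
  have hright : SectorInterlaces (N + X * A) (N + X * A + X * B) :=
    (refl _).add_right (hBN.X_mul_right.add_left hAB.X_mul_X_mul)
  rw [add_assoc, mul_add, ← add_assoc N]
  exact hleft.add_left hright

end SectorInterlaces

variable {f g : ℝ[X]}

lemma realRooted_zero : RealRooted 0 := by simp [RealRooted]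

lemma realRooted_one : RealRooted 1 := by simp [RealRooted]

lemma RealRooted.aeval_ne_zero (hf : RealRooted f) (hf0 : f ≠ 0) {z : ℂ} (hz : 0 < z.im) :
    aeval z f ≠ 0 := fun h ↦ by
  have hroot : z ∈ (f.map (algebraMap ℝ ℂ)).roots :=
    (mem_roots_map hf0).2 (by rwa [← aeval_def])
  exact hz.ne' (hf z hroot)

lemma realRooted_of_aeval_ne_zero (h : ∀ z : ℂ, 0 < z.im → aeval z f ≠ 0) : RealRooted f := by
  intro z hz
  have hroot : aeval z f = 0 := by
    simpa only [IsRoot.def, eval_map_algebraMap] using isRoot_of_mem_roots hz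
  rcases lt_trichotomy z.im 0 with hneg | hzero | hpos
  · have hconj : 0 < (conj z).im := by rw [Complex.conj_im]; exact neg_pos.2 hneg
    exact absurd (by rw [aeval_conj, hroot, map_zero]) (h (conj z) hconj)
  · exact hzero
  · exact absurd hroot (h z hpos)

lemma RealRooted.X_mul (hf : RealRooted f) : RealRooted (X * f) := by
  rcases eq_or_ne f 0 with rfl | hf0
  · rwa [mul_zero]
  refine realRooted_of_aeval_ne_zero fun z hz ↦ ?_
  rw [map_mul, aeval_X]
  refine mul_ne_zero ?_ (hf.aeval_ne_zero hf0 hz)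
  rintro rfl
  exact hz.ne rfl

/-- At a common zero of `f + g` in the upper half-plane, `g / f = -1` would lie outside the
sector. -/
lemma RealRooted.add (hf : RealRooted f) (hg : RealRooted g) (h : SectorInterlaces f g) :
    RealRooted (f + g) := by
  rcases eq_or_ne f 0 with rfl | hf0
  · rwa [zero_add]
  refine realRooted_of_aeval_ne_zero fun z hz hsum ↦ ?_
  rw [map_add] at hsum
  have hsector := (h z hz).2
  rw [eq_neg_of_add_eq_zero_right hsum, map_neg, mul_neg, mul_assoc, Complex.mul_conj,
    Complex.neg_im, Complex.im_mul_ofReal] at hsector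
  have := mul_pos hz (Complex.normSq_pos.2 (hf.aeval_ne_zero hf0 hz))
  linarith

lemma RealRooted.sum {ι : Type*} [LinearOrder ι] {s : Finset ι} {f : ι → ℝ[X]}
    (hf : ∀ i ∈ s, RealRooted (f i))
    (h : ∀ i ∈ s, ∀ j ∈ s, i < j → SectorInterlaces (f i) (f j)) :
    RealRooted (∑ i ∈ s, f i) := by
  induction s using Finset.induction_on_max with
  | empty => simpa using realRooted_zero
  | insert m s hm ih =>
    have hlast : SectorInterlaces (∑ i ∈ s, f i) (f m) := by
      simpa using SectorInterlaces.sum_sum (t := {m}) fun i hi j hj ↦ by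
        rw [Finset.mem_singleton.1 hj]
        exact h i (by simp [hi]) m (by simp) (hm i hi)
    rw [Finset.sum_insert fun hmem ↦ (hm m hmem).false, add_comm]
    refine RealRooted.add ?_ (hf m (by simp)) hlast
    exact ih (fun i hi ↦ hf i (by simp [hi])) fun i hi j hj ↦ h i (by simp [hi]) j (by simp [hj])

end SectorInterlaces

section FilterSums

variable {ι M : Type*} [LinearOrder ι] [AddCommMonoid M] {k l : ι}

lemma sum_filter_lt_eq_add (s : Finset ι) (f : ι → M) (hkl : k ≤ l) :
    ∑ j ∈ s with j < l, f j = ∑ j ∈ s with j < k, f j + ∑ j ∈ s with k ≤ j ∧ j < l, f j := by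
  rw [← Finset.sum_filter_add_sum_filter_not (s.filter (· < l)) (· < k), Finset.filter_filter,
    Finset.filter_filter]
  congr! 3 <;> grind

lemma sum_filter_ge_eq_add (s : Finset ι) (f : ι → M) (hkl : k ≤ l) :
    ∑ j ∈ s with k ≤ j, f j = ∑ j ∈ s with k ≤ j ∧ j < l, f j + ∑ j ∈ s with l ≤ j, f j := by
  rw [← Finset.sum_filter_add_sum_filter_not (s.filter (k ≤ ·)) (· < l), Finset.filter_filter,
    Finset.filter_filter]
  congr! 3
  grind

end FilterSums

section InterlacingRows

variable {ι : Type*} [LinearOrder ι] {s : Finset ι} {a b : ι → ℝ[X]}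

/-- The invariant of the induction: a top row `a` and a bottom row `b`, indexed by `s`, such that
`a`, `b` and the middle row `a + b` are interlacing sequences and every entry of `a` interlaces
every entry of `b`. Real-rootedness of the middle row is a consequence. -/
structure InterlacingRows (s : Finset ι) (a b : ι → ℝ[X]) : Prop where
  realRooted_top : ∀ {i}, i ∈ s → RealRooted (a i)
  realRooted_bot : ∀ {i}, i ∈ s → RealRooted (b i)
  top_top : ∀ {i j}, i ∈ s → j ∈ s → i ≤ j → SectorInterlaces (a i) (a j)
  bot_bot : ∀ {i j}, i ∈ s → j ∈ s → i ≤ j → SectorInterlaces (b i) (b j)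
  top_bot : ∀ {i j}, i ∈ s → j ∈ s → SectorInterlaces (a i) (b j)
  mid_mid : ∀ {i j}, i ∈ s → j ∈ s → i ≤ j → SectorInterlaces (a i + b i) (a j + b j)

namespace InterlacingRows

variable {i j : ι} {p q : ι → Prop} [DecidablePred p] [DecidablePred q]

lemma top_mid (H : InterlacingRows s a b) (hi : i ∈ s) (hj : j ∈ s) (hij : i ≤ j) :
    SectorInterlaces (a i) (a j + b j) :=
  (H.top_top hi hj hij).add_right (H.top_bot hi hj)

lemma mid_bot (H : InterlacingRows s a b) (hi : i ∈ s) (hj : j ∈ s) (hij : i ≤ j) :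
    SectorInterlaces (a i + b i) (b j) :=
  (H.top_bot hi hj).add_left (H.bot_bot hi hj hij)

lemma realRooted_mid (H : InterlacingRows s a b) (hi : i ∈ s) : RealRooted (a i + b i) :=
  (H.realRooted_top hi).add (H.realRooted_bot hi) (H.top_bot hi hi)

lemma congr {a' b' : ι → ℝ[X]} (H : InterlacingRows s a b) (ha : ∀ i ∈ s, a' i = a i)
    (hb : ∀ i ∈ s, b' i = b i) : InterlacingRows s a' b' where
  realRooted_top hi := by simpa only [ha _ hi] using H.realRooted_top hi
  realRooted_bot hi := by simpa only [hb _ hi] using H.realRooted_bot hi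
  top_top hi hj hij := by simpa only [ha _ hi, ha _ hj] using H.top_top hi hj hij
  bot_bot hi hj hij := by simpa only [hb _ hi, hb _ hj] using H.bot_bot hi hj hij
  top_bot hi hj := by simpa only [ha _ hi, hb _ hj] using H.top_bot hi hj
  mid_mid hi hj hij := by
    simpa only [ha _ hi, ha _ hj, hb _ hi, hb _ hj] using H.mid_mid hi hj hij

lemma bot_zero (H : InterlacingRows s a b) : InterlacingRows s a fun _ ↦ 0 where
  realRooted_top := H.realRooted_top
  realRooted_bot _ := realRooted_zero
  top_top := H.top_top
  bot_bot _ _ _ := .refl 0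
  top_bot _ _ := .zero_right _
  mid_mid hi hj hij := by simpa only [add_zero] using H.top_top hi hj hij

lemma singleton {f g : ℝ[X]} (hf : RealRooted f) (hg : RealRooted g) (h : SectorInterlaces f g)
    (i : ι) : InterlacingRows {i} (fun _ ↦ f) (fun _ ↦ g) where
  realRooted_top _ := hf
  realRooted_bot _ := hg
  top_top _ _ _ := .refl f
  bot_bot _ _ _ := .refl g
  top_bot _ _ := h
  mid_mid _ _ _ := .refl (f + g)

lemma sum_top_sum_top (H : InterlacingRows s a b) (hpq : ∀ i j, p i → q j → i ≤ j) :
    SectorInterlaces (∑ i ∈ s with p i, a i) (∑ j ∈ s with q j, a j) :=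
  .sum_sum fun i hi j hj ↦ by
    rw [Finset.mem_filter] at hi hj
    exact H.top_top hi.1 hj.1 (hpq i j hi.2 hj.2)

lemma sum_top_sum_mid (H : InterlacingRows s a b) (hpq : ∀ i j, p i → q j → i ≤ j) :
    SectorInterlaces (∑ i ∈ s with p i, a i) (∑ j ∈ s with q j, (a j + b j)) :=
  .sum_sum fun i hi j hj ↦ by
    rw [Finset.mem_filter] at hi hj
    exact H.top_mid hi.1 hj.1 (hpq i j hi.2 hj.2)

lemma sum_mid_sum_mid (H : InterlacingRows s a b) (hpq : ∀ i j, p i → q j → i ≤ j) :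
    SectorInterlaces (∑ i ∈ s with p i, (a i + b i)) (∑ j ∈ s with q j, (a j + b j)) :=
  .sum_sum fun i hi j hj ↦ by
    rw [Finset.mem_filter] at hi hj
    exact H.mid_mid hi.1 hj.1 (hpq i j hi.2 hj.2)

lemma sum_top_sum_mid_self (H : InterlacingRows s a b) :
    SectorInterlaces (∑ i ∈ s with p i, a i) (∑ i ∈ s with p i, (a i + b i)) := by
  rw [Finset.sum_add_distrib]
  exact (SectorInterlaces.refl _).add_right <| .sum_sum fun i hi j hj ↦
    H.top_bot (Finset.mem_filter.1 hi).1 (Finset.mem_filter.1 hj).1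

lemma sum_lt_sum_ge (H : InterlacingRows s a b) (k l : ι) :
    SectorInterlaces (∑ j ∈ s with j < l, a j) (∑ j ∈ s with k ≤ j, (a j + b j)) := by
  rcases le_total l k with hlk | hkl
  · exact H.sum_top_sum_mid (by grind)
  rw [sum_filter_lt_eq_add s _ hkl, sum_filter_ge_eq_add s _ hkl]
  have hleft : SectorInterlaces (∑ j ∈ s with j < k, a j)
      (∑ j ∈ s with k ≤ j ∧ j < l, (a j + b j) + ∑ j ∈ s with l ≤ j, (a j + b j)) :=
    (H.sum_top_sum_mid (by grind)).add_right (H.sum_top_sum_mid (by grind))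
  exact hleft.add_left (H.sum_top_sum_mid_self.add_right (H.sum_top_sum_mid (by grind)))

lemma sum_ge_X_mul_sum_lt (H : InterlacingRows s a b) (t : Finset ι) :
    InterlacingRows t (fun k ↦ ∑ j ∈ s with k ≤ j, (a j + b j))
      (fun k ↦ X * ∑ j ∈ s with j < k, a j) where
  realRooted_top _ := .sum (fun _ hi ↦ H.realRooted_mid (Finset.mem_filter.1 hi).1)
    fun _ hi _ hj hij ↦ H.mid_mid (Finset.mem_filter.1 hi).1 (Finset.mem_filter.1 hj).1 hij.le
  realRooted_bot _ := .X_mul <| .sum (fun _ hi ↦ H.realRooted_top (Finset.mem_filter.1 hi).1)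
    fun _ hi _ hj hij ↦ H.top_top (Finset.mem_filter.1 hi).1 (Finset.mem_filter.1 hj).1 hij.le
  top_top {k l} _ _ hkl := by
    rw [sum_filter_ge_eq_add s _ hkl]
    exact (H.sum_mid_sum_mid (by grind)).add_left (.refl _)
  bot_bot {k l} _ _ hkl := by
    rw [sum_filter_lt_eq_add s _ hkl]
    exact ((SectorInterlaces.refl _).add_right (H.sum_top_sum_top (by grind))).X_mul_X_mul
  top_bot {k l} _ _ := (H.sum_lt_sum_ge k l).X_mul_right
  mid_mid {k l} _ _ hkl := by
    rw [sum_filter_ge_eq_add s _ hkl, sum_filter_lt_eq_add s _ hkl]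
    exact .add_X_mul_add_X_mul (H.sum_top_sum_top (by grind)) (H.sum_top_sum_mid (by grind))
      H.sum_top_sum_mid_self (H.sum_top_sum_mid (by grind)) (H.sum_mid_sum_mid (by grind))

end InterlacingRows

end InterlacingRows

section TotalArg

open Filter Topology ComplexConjugate

variable {f g : ℝ[X]}

lemma RealRooted.splits (hf : RealRooted f) : f.Splits :=
  .of_splits_map (algebraMap ℝ ℂ) (IsAlgClosed.splits _) fun z hz ↦
    ⟨z.re, Complex.ext rfl (hf z hz).symm⟩

lemma RealRooted.aeval_eq_prod_roots (hf : RealRooted f) (z : ℂ) :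
    aeval z f = f.leadingCoeff * (f.roots.map fun a : ℝ ↦ z - a).prod := by
  conv_lhs => rw [hf.splits.eq_prod_roots]
  simp only [map_mul, aeval_C, map_multiset_prod, Multiset.map_map, Function.comp_apply, map_sub,
    aeval_X, Complex.coe_algebraMap]

lemma multiset_prod_eq_norm_mul_exp (s : Multiset ℂ) :
    s.prod = ‖s.prod‖ * Complex.exp ((s.map Complex.arg).sum * Complex.I) := by
  induction s using Multiset.induction_on with
  | empty => simp
  | cons z s ih =>
    rw [Multiset.prod_cons, Multiset.map_cons, Multiset.sum_cons, norm_mul, Complex.ofReal_mul,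
      Complex.ofReal_add, add_mul, Complex.exp_add, mul_mul_mul_comm, ← ih,
      Complex.norm_mul_exp_arg_mul_I]

/-- The continuous branch on the upper half-plane of the argument of a real-rooted polynomial with
positive leading coefficient: the sum of the angles at which `z` is seen from the roots. -/
noncomputable def totalArg (f : ℝ[X]) (z : ℂ) : ℝ := (f.roots.map fun a : ℝ ↦ (z - a).arg).sum

lemma RealRooted.aeval_eq_norm_mul_exp (hf : RealRooted f) (hlead : 0 < f.leadingCoeff) (z : ℂ) :
    aeval z f = ‖aeval z f‖ * Complex.exp (totalArg f z * Complex.I) := by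
  have hprod := multiset_prod_eq_norm_mul_exp (f.roots.map fun a : ℝ ↦ z - a)
  rw [Multiset.map_map] at hprod
  rw [hf.aeval_eq_prod_roots, norm_mul, Complex.norm_of_nonneg hlead.le, Complex.ofReal_mul,
    mul_assoc, totalArg]
  exact congrArg _ hprod

lemma im_mul_conj_of_eq_mul_exp {u v : ℂ} {r s α β : ℝ} (hu : u = r * Complex.exp (α * Complex.I))
    (hv : v = s * Complex.exp (β * Complex.I)) : (u * conj v).im = r * s * Real.sin (α - β) := by
  have hpolar : u * conj v = (r * s : ℝ) * Complex.exp ((α - β : ℝ) * Complex.I) := by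
    rw [hu, hv, map_mul, ← Complex.exp_conj, Complex.conj_ofReal, map_mul, Complex.conj_ofReal,
      Complex.conj_I, mul_mul_mul_comm, ← Complex.exp_add]
    push_cast
    ring_nf
  rw [hpolar, Complex.im_ofReal_mul, Complex.exp_ofReal_mul_I_im]

lemma SectorInterlaces.sin_nonneg (h : SectorInterlaces f g) (hf : RealRooted f)
    (hg : RealRooted g) (hf0 : 0 < f.leadingCoeff) (hg0 : 0 < g.leadingCoeff) {z : ℂ}
    (hz : 0 < z.im) :
    0 ≤ Real.sin (totalArg g z - totalArg f z) ∧
      0 ≤ Real.sin (z.arg - (totalArg g z - totalArg f z)) := by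
  have hfz := norm_pos_iff.2 (hf.aeval_ne_zero (leadingCoeff_ne_zero.1 hf0.ne') hz)
  have hgz := norm_pos_iff.2 (hg.aeval_ne_zero (leadingCoeff_ne_zero.1 hg0.ne') hz)
  have hz0 : 0 < ‖z‖ := norm_pos_iff.2 fun h0 ↦ hz.ne' (by rw [h0, Complex.zero_im])
  have hpolar_f := hf.aeval_eq_norm_mul_exp hf0 z
  have hpolar_g := hg.aeval_eq_norm_mul_exp hg0 z
  have hpolar_zf : z * aeval z f = (‖z‖ * ‖aeval z f‖ : ℝ) *
      Complex.exp ((z.arg + totalArg f z : ℝ) * Complex.I) := by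
    rw [Complex.ofReal_mul, Complex.ofReal_add, add_mul, Complex.exp_add, mul_mul_mul_comm,
      ← hpolar_f, Complex.norm_mul_exp_arg_mul_I]
  have hsector := h z hz
  rw [im_mul_conj_of_eq_mul_exp hpolar_g hpolar_f,
    im_mul_conj_of_eq_mul_exp hpolar_zf hpolar_g] at hsector
  rw [sub_sub_eq_add_sub]
  exact ⟨nonneg_of_mul_nonneg_right hsector.1 (by positivity),
    nonneg_of_mul_nonneg_right hsector.2 (by positivity)⟩

lemma continuous_totalArg (f : ℝ[X]) {ε : ℝ} (hε : 0 < ε) :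
    Continuous fun s : ℝ ↦ totalArg f (s + ε * Complex.I) := by
  refine continuous_multiset_sum _ fun a _ ↦ continuous_iff_continuousAt.2 fun s ↦ ?_
  refine ContinuousAt.comp (f := fun s : ℝ ↦ (s + ε * Complex.I - a : ℂ))
    (Complex.continuousAt_arg <| Complex.mem_slitPlane_iff.2 <| .inr ?_) (by fun_prop)
  simpa using hε.ne'

lemma tendsto_arg_add_mul_I_atTop (a ε : ℝ) :
    Tendsto (fun s : ℝ ↦ (s + ε * Complex.I - a : ℂ).arg) atTop (𝓝 0) := by
  have hquot : Tendsto (fun s : ℝ ↦ ((1 : ℝ) + (ε / (s - a) : ℝ) * Complex.I)) atTop (𝓝 1) := by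
    have := (tendsto_atTop_add_const_right atTop (-a) tendsto_id).const_div_atTop ε
    simpa [sub_eq_add_neg] using
      ((Complex.continuous_ofReal.tendsto 0).comp this).mul_const Complex.I |>.const_add 1
  have harg := (Complex.continuousAt_arg Complex.one_mem_slitPlane).tendsto.comp hquot
  rw [Complex.arg_one] at harg
  refine harg.congr' ((eventually_gt_atTop a).mono fun s hs ↦ ?_)
  have hsa : (s - a : ℂ) ≠ 0 := by exact_mod_cast (sub_pos.2 hs).ne'
  rw [Function.comp_apply, ← Complex.arg_real_mul _ (sub_pos.2 hs)]
  congr 1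
  push_cast
  field_simp
  ring

lemma tendsto_totalArg_atTop (f : ℝ[X]) (ε : ℝ) :
    Tendsto (fun s : ℝ ↦ totalArg f (s + ε * Complex.I)) atTop (𝓝 0) := by
  simpa [totalArg] using tendsto_multiset_sum f.roots fun a _ ↦ tendsto_arg_add_mul_I_atTop a ε

lemma tendsto_arg_add_mul_I_nhdsGT_zero {a t : ℝ} (hta : t ≠ a) :
    Tendsto (fun ε : ℝ ↦ (t + ε * Complex.I - a : ℂ).arg) (𝓝[>] 0)
      (𝓝 (if t < a then Real.pi else 0)) := by
  have hlim : Tendsto (fun ε : ℝ ↦ (t + ε * Complex.I - a : ℂ)) (𝓝[>] 0) (𝓝 (t - a : ℝ)) := by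
    refine Tendsto.mono_left ?_ nhdsWithin_le_nhds
    exact Continuous.tendsto' (by fun_prop) _ _ (by simp)
  split_ifs with hlt
  · refine (Complex.tendsto_arg_nhdsWithin_im_nonneg_of_re_neg_of_im_zero (by simpa using hlt)
      (by simp)).comp (tendsto_nhdsWithin_iff.2 ⟨hlim, ?_⟩)
    exact eventually_mem_nhdsWithin.mono fun ε hε ↦ by simpa using (Set.mem_Ioi.1 hε).le
  · have hpos : 0 < t - a := sub_pos.2 (lt_of_le_of_ne (not_lt.1 hlt) hta.symm)
    have harg := (Complex.continuousAt_arg (Complex.ofReal_mem_slitPlane.2 hpos)).tendsto.comp hlim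
    rwa [Complex.arg_ofReal_of_nonneg hpos.le] at harg

lemma tendsto_totalArg_nhdsGT_zero {t : ℝ} (ht : t ∉ f.roots) :
    Tendsto (fun ε : ℝ ↦ totalArg f (t + ε * Complex.I)) (𝓝[>] 0)
      (𝓝 (f.roots.countP (t < ·) * Real.pi)) := by
  have hsum : (f.roots.map fun a ↦ if t < a then Real.pi else 0).sum =
      f.roots.countP (t < ·) * Real.pi := by
    induction f.roots using Multiset.induction_on with
    | empty => simp
    | cons a s ih =>
      rw [Multiset.map_cons, Multiset.sum_cons, ih, Multiset.countP_cons]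
      split_ifs <;> push_cast <;> ring
  rw [← hsum]
  exact tendsto_multiset_sum f.roots fun a ha ↦
    tendsto_arg_add_mul_I_nhdsGT_zero (ne_of_mem_of_not_mem ha ht).symm

/-- By the intermediate value theorem `φ` can leave `[0, π]` only through `π`, where the second
sine is negative, or through `(-π, 0)`, where the first one is. -/
lemma mem_Icc_zero_pi_of_sin_nonneg {φ θ : ℝ → ℝ} (hφ : Continuous φ)
    (hlim : Tendsto φ atTop (𝓝 0)) (hθ : ∀ s, θ s ∈ Set.Ioo 0 Real.pi)
    (hsin : ∀ s, 0 ≤ Real.sin (φ s)) (hsin_sub : ∀ s, 0 ≤ Real.sin (θ s - φ s)) (s : ℝ) :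
    φ s ∈ Set.Icc 0 Real.pi := by
  have hpi := Real.pi_pos
  have hupper : φ s < Real.pi := by
    by_contra! hs
    obtain ⟨r, hr⟩ := mem_range_of_exists_le_of_exists_ge hφ
      ((hlim.eventually_le_const hpi).exists) ⟨s, hs⟩
    have := hsin_sub r
    rw [hr, Real.sin_sub_pi] at this
    linarith [Real.sin_pos_of_mem_Ioo (hθ r)]
  have hlower : -(Real.pi / 2) < φ s := by
    by_contra! hs
    obtain ⟨r, hr⟩ := mem_range_of_exists_le_of_exists_ge hφ ⟨s, hs⟩
      ((hlim.eventually_const_le (neg_lt_zero.2 (half_pos hpi))).exists)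
    have := hsin r
    rw [hr, Real.sin_neg, Real.sin_pi_div_two] at this
    linarith
  refine ⟨?_, hupper.le⟩
  by_contra! hneg
  exact (hsin s).not_gt (Real.sin_neg_of_neg_of_neg_pi_lt hneg (by linarith))

lemma SectorInterlaces.totalArg_sub_mem_Icc (h : SectorInterlaces f g) (hf : RealRooted f)
    (hg : RealRooted g) (hf0 : 0 < f.leadingCoeff) (hg0 : 0 < g.leadingCoeff) (t : ℝ) {ε : ℝ}
    (hε : 0 < ε) :
    totalArg g (t + ε * Complex.I) - totalArg f (t + ε * Complex.I) ∈ Set.Icc 0 Real.pi := by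
  have him (s : ℝ) : 0 < (s + ε * Complex.I : ℂ).im := by simpa using hε
  refine mem_Icc_zero_pi_of_sin_nonneg (φ := fun s ↦ totalArg g (s + ε * Complex.I) -
    totalArg f (s + ε * Complex.I)) (θ := fun s ↦ (s + ε * Complex.I : ℂ).arg)
    ((continuous_totalArg g hε).sub (continuous_totalArg f hε)) ?_ (fun s ↦ ?_)
    (fun s ↦ (h.sin_nonneg hf hg hf0 hg0 (him s)).1)
    (fun s ↦ (h.sin_nonneg hf hg hf0 hg0 (him s)).2) t
  · simpa using (tendsto_totalArg_atTop g ε).sub (tendsto_totalArg_atTop f ε)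
  · have harg_ne : (s + ε * Complex.I : ℂ).arg ≠ Real.pi := fun hπ ↦
      (him s).ne' (Complex.arg_eq_pi_iff.1 hπ).2
    have harg_ne_zero : (s + ε * Complex.I : ℂ).arg ≠ 0 := fun h0 ↦
      (him s).ne' (Complex.arg_eq_zero_iff.1 h0).2
    exact ⟨(Complex.arg_nonneg_iff.2 (him s).le).lt_of_ne' harg_ne_zero,
      (Complex.arg_le_pi _).lt_of_ne harg_ne⟩

lemma SectorInterlaces.countP_roots_le (h : SectorInterlaces f g) (hf : RealRooted f)
    (hg : RealRooted g) (hf0 : 0 < f.leadingCoeff) (hg0 : 0 < g.leadingCoeff) {t : ℝ}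
    (htf : t ∉ f.roots) (htg : t ∉ g.roots) :
    f.roots.countP (t < ·) ≤ g.roots.countP (t < ·) ∧
      g.roots.countP (t < ·) ≤ f.roots.countP (t < ·) + 1 := by
  have hlim := (tendsto_totalArg_nhdsGT_zero htg).sub (tendsto_totalArg_nhdsGT_zero htf)
  have hmem := isClosed_Icc.mem_of_tendsto hlim <| eventually_mem_nhdsWithin.mono fun ε hε ↦
    h.totalArg_sub_mem_Icc hf hg hf0 hg0 t (Set.mem_Ioi.1 hε)
  rw [← sub_mul, Set.mem_Icc, mul_nonneg_iff_of_pos_right Real.pi_pos, sub_nonneg,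
    mul_le_iff_le_one_left Real.pi_pos, sub_le_iff_le_add'] at hmem
  exact_mod_cast hmem

end TotalArg

section SortedLists

variable {α : Type*} [LinearOrder α]

lemma lt_getElem_iff_lt_countP {l : List α} (hl : l.Pairwise (· ≥ ·)) (t : α) {i : ℕ}
    (hi : i < l.length) : t < l[i] ↔ i < l.countP (t < ·) := by
  induction l generalizing i with
  | nil => simp at hi
  | cons a l ih =>
    rw [List.pairwise_cons] at hl
    by_cases hta : t < a
    · cases i with
      | zero => simp [hta]
      | succ i => simpa [hta] using ih hl.2 (by simpa using hi)
    · have hcount : l.countP (t < ·) = 0 := List.countP_eq_zero.2 fun b hb ↦ by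
        simpa using (hl.1 b hb).trans (not_lt.1 hta)
      have hle : (a :: l)[i] ≤ t := by
        rcases List.mem_cons.1 (List.getElem_mem hi) with heq | hmem
        · exact heq.trans_le (not_lt.1 hta)
        · exact (hl.1 _ hmem).trans (not_lt.1 hta)
      simp [hta, hcount, hle]

lemma getElem_add_le_getElem_of_countP_le [DenselyOrdered α] {l m : List α} {d i : ℕ}
    (hl : l.Pairwise (· ≥ ·)) (hm : m.Pairwise (· ≥ ·))
    (hcount : ∀ t, t ∉ l → t ∉ m → l.countP (t < ·) ≤ m.countP (t < ·) + d)
    (hil : i + d < l.length) (him : i < m.length) : l[i + d] ≤ m[i] := by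
  by_contra! hlt
  obtain ⟨t, ⟨hmt, htl⟩, ht⟩ := (Set.Ioo_infinite hlt).exists_notMem_finset (l ++ m).toFinset
  rw [List.mem_toFinset, List.mem_append, not_or] at ht
  have hcount_l := (lt_getElem_iff_lt_countP hl t hil).1 htl
  have hcount_m := mt (lt_getElem_iff_lt_countP hm t him).2 hmt.not_gt
  have := hcount t ht.1 ht.2
  omega

end SortedLists

section Interlaces

variable {f g : ℝ[X]}

lemma pairwise_descRoots (f : ℝ[X]) : (descRoots f).Pairwise (· ≥ ·) :=
  List.pairwise_reverse.2 (f.roots.pairwise_sort (· ≤ ·))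

lemma mem_descRoots {t : ℝ} : t ∈ descRoots f ↔ t ∈ f.roots := by
  rw [descRoots, List.mem_reverse, Multiset.mem_sort]

lemma countP_descRoots (f : ℝ[X]) (p : ℝ → Prop) [DecidablePred p] :
    (descRoots f).countP (p ·) = f.roots.countP p := by
  rw [descRoots, List.countP_reverse, ← Multiset.coe_countP, Multiset.sort_eq]

lemma SectorInterlaces.natDegree_le (h : SectorInterlaces f g) (hf : RealRooted f)
    (hg : RealRooted g) (hf0 : 0 < f.leadingCoeff) (hg0 : 0 < g.leadingCoeff) :
    f.natDegree ≤ g.natDegree ∧ g.natDegree ≤ f.natDegree + 1 := by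
  obtain ⟨m, hm⟩ := (f.roots + g.roots).toFinset.bddBelow
  obtain ⟨t, htm⟩ := exists_lt m
  have hlt : ∀ a ∈ f.roots + g.roots, t < a := fun a ha ↦
    htm.trans_le (hm (Multiset.mem_toFinset.2 ha))
  have hltf : ∀ a ∈ f.roots, t < a := fun a ha ↦ hlt a (Multiset.mem_add.2 (.inl ha))
  have hltg : ∀ a ∈ g.roots, t < a := fun a ha ↦ hlt a (Multiset.mem_add.2 (.inr ha))
  have hcount := h.countP_roots_le hf hg hf0 hg0 (fun ht ↦ (hltf t ht).false)
    fun ht ↦ (hltg t ht).false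
  rwa [Multiset.countP_eq_card.2 hltf, Multiset.countP_eq_card.2 hltg,
    ← hf.splits.natDegree_eq_card_roots, ← hg.splits.natDegree_eq_card_roots] at hcount

lemma SectorInterlaces.interlaces (h : SectorInterlaces f g) (hf : RealRooted f)
    (hg : RealRooted g) (hf0 : 0 ≤ f.leadingCoeff) (hg0 : 0 ≤ g.leadingCoeff) :
    Interlaces f g := by
  refine ⟨hf, hg, or_iff_not_imp_left.2 fun hf_ne ↦ or_iff_not_imp_left.2 fun hg_ne ↦ .inr ?_⟩
  replace hf0 := hf0.lt_of_ne' (leadingCoeff_ne_zero.2 hf_ne)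
  replace hg0 := hg0.lt_of_ne' (leadingCoeff_ne_zero.2 hg_ne)
  have hcount {t : ℝ} (htf : t ∉ descRoots f) (htg : t ∉ descRoots g) :
      (descRoots f).countP (t < ·) ≤ (descRoots g).countP (t < ·) ∧
        (descRoots g).countP (t < ·) ≤ (descRoots f).countP (t < ·) + 1 := by
    rw [countP_descRoots, countP_descRoots]
    exact h.countP_roots_le hf hg hf0 hg0 (mt mem_descRoots.2 htf) (mt mem_descRoots.2 htg)
  refine ⟨?_, fun i hif hig ↦ ?_, fun i hif hig ↦ ?_⟩
  · have := h.natDegree_le hf hg hf0 hg0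
    omega
  · exact getElem_add_le_getElem_of_countP_le (d := 0) (pairwise_descRoots f)
      (pairwise_descRoots g) (fun t htf htg ↦ (hcount htf htg).1) hif hig
  · exact getElem_add_le_getElem_of_countP_le (d := 1) (pairwise_descRoots g)
      (pairwise_descRoots f) (fun t htg htf ↦ (hcount htf htg).2) hig hif

end Interlaces

section DescentSets

variable {n : ℕ} {S T : Finset ℕ}

lemma isolatedSet_image_succ : IsolatedSet (S.image (· + 1)) ↔ IsolatedSet S := by
  simp [IsolatedSet]

lemma isolatedSet_insert_one_image_succ :
    IsolatedSet (insert 1 (S.image (· + 1))) ↔ IsolatedSet S ∧ 1 ∉ S := by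
  simp only [IsolatedSet, Finset.mem_insert, Finset.mem_image]
  grind

lemma mem_shiftDown_succ {m : ℕ} : m ∈ shiftDown (n + 1) T ↔ m + 1 ∈ T ∧ m ∈ Finset.Icc 1 n := by
  rw [shiftDown, Finset.mem_inter, Finset.mem_image, Nat.add_sub_cancel]
  grind

lemma image_succ_subset_iff (hS : S ⊆ Finset.Icc 1 n) :
    S.image (· + 1) ⊆ T ↔ S ⊆ shiftDown (n + 1) T := by
  simp only [Finset.subset_iff, Finset.forall_mem_image, mem_shiftDown_succ]
  exact forall₂_congr fun m hm ↦ (and_iff_left (hS hm)).symm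

lemma mem_desSet {w : Equiv.Perm (Fin (n + 1))} {m : ℕ} :
    m ∈ desSet w ↔ ∃ i : Fin n, w i.succ < w i.castSucc ∧ i.val + 1 = m := by
  simp [desSet]

lemma desSet_subset_Icc (w : Equiv.Perm (Fin (n + 1))) : desSet w ⊆ Finset.Icc 1 n := by
  intro m hm
  obtain ⟨i, -, rfl⟩ := mem_desSet.1 hm
  exact Finset.mem_Icc.2 ⟨Nat.le_add_left 1 i, i.isLt⟩

lemma zero_notMem_desSet (w : Equiv.Perm (Fin (n + 1))) : 0 ∉ desSet w := fun h ↦ by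
  simpa using desSet_subset_Icc w h

lemma succ_mem_desSet {w : Equiv.Perm (Fin (n + 1))} (i : Fin n) :
    (i : ℕ) + 1 ∈ desSet w ↔ w i.succ < w i.castSucc := by
  rw [mem_desSet]
  grind

/-- The permutation with first letter `p` whose remaining letters are those of `σ`, the letters
`≥ p` being raised by one. Every permutation arises in this way from exactly one pair `(p, σ)`. -/
def consPerm (p : Fin (n + 2)) (σ : Equiv.Perm (Fin (n + 1))) : Equiv.Perm (Fin (n + 2)) :=
  ((finSuccEquiv' 0).trans σ.optionCongr).trans (finSuccEquiv' p).symm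

@[simp]
lemma consPerm_zero (p : Fin (n + 2)) (σ : Equiv.Perm (Fin (n + 1))) : consPerm p σ 0 = p := by
  simp [consPerm]

@[simp]
lemma consPerm_succ (p : Fin (n + 2)) (σ : Equiv.Perm (Fin (n + 1))) (i : Fin (n + 1)) :
    consPerm p σ i.succ = p.succAbove (σ i) := by
  rw [← Fin.succAbove_zero]
  simp only [consPerm, Equiv.trans_apply, finSuccEquiv'_succAbove, Equiv.optionCongr_apply,
    Option.map_some, finSuccEquiv'_symm_some]

lemma consPerm_injective (p : Fin (n + 2)) : Function.Injective (consPerm p) := fun σ τ h ↦ by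
  ext i
  have hi := DFunLike.congr_fun h i.succ
  rw [consPerm_succ, consPerm_succ] at hi
  rw [Fin.succAbove_right_injective hi]

lemma exists_consPerm_eq (w : Equiv.Perm (Fin (n + 2))) : ∃ σ, consPerm (w 0) σ = w := by
  let e := ((finSuccEquiv' 0).symm.trans w).trans (finSuccEquiv' (w 0))
  have hnone : e none = none := by simp [e]
  refine ⟨Equiv.removeNone e, ?_⟩
  have hcongr : (Equiv.removeNone e).optionCongr = e := by
    rw [map_equiv_removeNone, hnone, Equiv.swap_self]
    rfl
  rw [consPerm, hcongr]
  ext i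
  simp [e]

lemma one_mem_desSet_consPerm {p : Fin (n + 2)} {σ : Equiv.Perm (Fin (n + 1))} :
    1 ∈ desSet (consPerm p σ) ↔ (σ 0 : ℕ) < p := by
  have h := succ_mem_desSet (w := consPerm p σ) 0
  rwa [consPerm_succ, Fin.castSucc_zero, consPerm_zero, Fin.succAbove_lt_iff_castSucc_lt,
    Fin.lt_def, Fin.val_castSucc, Fin.val_zero, zero_add] at h

lemma add_two_mem_desSet_consPerm {p : Fin (n + 2)} {σ : Equiv.Perm (Fin (n + 1))} {m : ℕ} :
    m + 2 ∈ desSet (consPerm p σ) ↔ m + 1 ∈ desSet σ := by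
  by_cases hm : m < n
  · have h := succ_mem_desSet (w := consPerm p σ) (Fin.succ ⟨m, hm⟩)
    have h' := succ_mem_desSet (w := σ) ⟨m, hm⟩
    rw [consPerm_succ, ← Fin.succ_castSucc, consPerm_succ,
      (Fin.strictMono_succAbove p).lt_iff_lt] at h
    exact h.trans h'.symm
  · refine iff_of_false (fun h ↦ hm ?_) fun h ↦ hm ?_
    · have := Finset.mem_Icc.1 (desSet_subset_Icc _ h)
      omega
    · have := Finset.mem_Icc.1 (desSet_subset_Icc _ h)
      omega

lemma desSet_consPerm_of_le {p : Fin (n + 2)} {σ : Equiv.Perm (Fin (n + 1))}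
    (h : (p : ℕ) ≤ σ 0) : desSet (consPerm p σ) = (desSet σ).image (· + 1) := by
  ext m
  rcases m with _ | _ | m
  · simp [zero_notMem_desSet]
  · simp [one_mem_desSet_consPerm, zero_notMem_desSet, h]
  · simp [add_two_mem_desSet_consPerm]

lemma desSet_consPerm_of_lt {p : Fin (n + 2)} {σ : Equiv.Perm (Fin (n + 1))}
    (h : (σ 0 : ℕ) < p) : desSet (consPerm p σ) = insert 1 ((desSet σ).image (· + 1)) := by
  ext m
  rcases m with _ | _ | m
  · simp [zero_notMem_desSet]
  · simp [one_mem_desSet_consPerm, h]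
  · simp [add_two_mem_desSet_consPerm]

end DescentSets

section DescentPolynomials

lemma pPoly_zero_zero (T : Finset ℕ) : pPoly 0 0 ∅ T = 1 := by
  have h : ∀ w : Equiv.Perm (Fin 1), desSet w = ∅ := fun w ↦ by simp [desSet]
  simp [pPoly, h, IsolatedSet]

lemma pPoly_zero_singleton_one (k : ℕ) (T : Finset ℕ) : pPoly 0 k {1} T = 0 := by
  have h : ∀ w : Equiv.Perm (Fin 1), desSet w = ∅ := fun w ↦ by simp [desSet]
  simp [pPoly, h]

lemma pPoly_eq_zero_of_not_subset {S T : Finset ℕ} (hST : ¬S ⊆ T) (n k : ℕ) :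
    pPoly n k S T = 0 := by
  rw [pPoly, Finset.filter_false_of_mem, Finset.sum_empty]
  rintro w - ⟨-, -, hS, hT⟩
  exact hST (hS.trans hT)

lemma pPoly_eq_erase_add_singleton (n k : ℕ) (T : Finset ℕ) :
    pPoly n k ∅ T = pPoly n k ∅ (T.erase 1) + pPoly n k {1} T := by
  simp only [pPoly, Finset.sum_filter, ← Finset.sum_add_distrib]
  refine Finset.sum_congr rfl fun w _ ↦ ?_
  simp only [Finset.subset_erase, Finset.singleton_subset_iff, Finset.empty_subset, true_and]
  by_cases h : 1 ∈ desSet w <;> simp [h]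

lemma leadingCoeff_pPoly_nonneg (n k : ℕ) (S T : Finset ℕ) : 0 ≤ (pPoly n k S T).leadingCoeff := by
  rw [leadingCoeff, pPoly, finsetSum_coeff]
  refine Finset.sum_nonneg fun w _ ↦ ?_
  rw [coeff_X_pow]
  split_ifs
  exacts [zero_le_one, le_rfl]

lemma sum_filter_zero_eq_sum_consPerm {n : ℕ} {M : Type*} [AddCommMonoid M] (p : Fin (n + 2))
    (P : Equiv.Perm (Fin (n + 2)) → Prop) [DecidablePred P]
    (F : Equiv.Perm (Fin (n + 2)) → M) :
    ∑ w with (w 0 : ℕ) = p ∧ P w, F w = ∑ σ with P (consPerm p σ), F (consPerm p σ) := by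
  refine (Finset.sum_bij (fun σ _ ↦ consPerm p σ) (fun σ hσ ↦ by simpa using hσ)
    (fun _ _ _ _ h ↦ consPerm_injective p h) (fun w hw ↦ ?_) fun _ _ ↦ rfl).symm
  obtain ⟨hw0, hPw⟩ := (Finset.mem_filter.1 hw).2
  obtain rfl := Fin.ext hw0
  obtain ⟨σ, hσ⟩ := exists_consPerm_eq w
  exact ⟨σ, by simpa [hσ] using hPw, hσ⟩

lemma sum_pPoly (n : ℕ) (q : ℕ → Prop) [DecidablePred q] (S T : Finset ℕ) :
    ∑ j ∈ Finset.range (n + 1) with q j, pPoly n j S T =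
      ∑ w : Equiv.Perm (Fin (n + 1)) with
        q (w 0) ∧ IsolatedSet (desSet w) ∧ S ⊆ desSet w ∧ desSet w ⊆ T, X ^ (desSet w).card := by
  simp only [pPoly, Finset.sum_filter]
  simp only [← Finset.sum_filter q]
  rw [Finset.sum_comm]
  refine Finset.sum_congr rfl fun w _ ↦ ?_
  have hw0 : (w 0 : ℕ) ≤ n := Nat.lt_succ_iff.1 (w 0).isLt
  by_cases h : IsolatedSet (desSet w) ∧ S ⊆ desSet w ∧ desSet w ⊆ T <;> simp [h, hw0]

lemma pPoly_succ_erase_one {n : ℕ} (p : Fin (n + 2)) (T : Finset ℕ) :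
    pPoly (n + 1) p ∅ (T.erase 1) =
      ∑ j ∈ Finset.range (n + 1) with (p : ℕ) ≤ j, pPoly n j ∅ (shiftDown (n + 1) T) := by
  rw [sum_pPoly, pPoly, sum_filter_zero_eq_sum_consPerm]
  refine Finset.sum_congr (Finset.filter_congr fun σ _ ↦ ?_) fun σ hσ ↦ ?_
  · rw [Finset.subset_erase, one_mem_desSet_consPerm, not_lt]
    by_cases h : (p : ℕ) ≤ σ 0
    · simp [h, desSet_consPerm_of_le h, isolatedSet_image_succ,
        image_succ_subset_iff (desSet_subset_Icc σ)]
    · simp [h]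
  · rw [desSet_consPerm_of_le (Finset.mem_filter.1 hσ).2.1,
      Finset.card_image_of_injective _ (add_left_injective 1)]

lemma pPoly_succ_singleton_one {n : ℕ} (p : Fin (n + 2)) {T : Finset ℕ} (hT : 1 ∈ T) :
    pPoly (n + 1) p {1} T =
      X * ∑ j ∈ Finset.range (n + 1) with j < (p : ℕ),
        pPoly n j ∅ ((shiftDown (n + 1) T).erase 1) := by
  rw [sum_pPoly, pPoly, sum_filter_zero_eq_sum_consPerm, Finset.mul_sum]
  refine Finset.sum_congr (Finset.filter_congr fun σ _ ↦ ?_) fun σ hσ ↦ ?_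
  · rw [Finset.singleton_subset_iff, one_mem_desSet_consPerm]
    by_cases h : (σ 0 : ℕ) < p
    · simp only [h, hT, desSet_consPerm_of_lt h, Finset.insert_subset_iff, Finset.subset_erase,
        isolatedSet_insert_one_image_succ,
        image_succ_subset_iff (desSet_subset_Icc σ), Finset.empty_subset, true_and]
      tauto
    · simp [h]
  · rw [desSet_consPerm_of_lt (Finset.mem_filter.1 hσ).2.1, Finset.card_insert_of_notMem,
      Finset.card_image_of_injective _ (add_left_injective 1), pow_succ']
    simpa using zero_notMem_desSet σ

end DescentPolynomials

section DescentInterlacing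

lemma interlacingRows_pPoly (n : ℕ) (T : Finset ℕ) :
    InterlacingRows (Finset.range (n + 1)) (fun k ↦ pPoly n k ∅ (T.erase 1))
      (fun k ↦ pPoly n k {1} T) := by
  induction n generalizing T with
  | zero =>
    refine (InterlacingRows.singleton realRooted_one realRooted_zero (.zero_right 1) 0).congr
      (fun k hk ↦ ?_) fun k _ ↦ pPoly_zero_singleton_one k T
    rw [Nat.lt_one_iff.1 (Finset.mem_range.1 hk), pPoly_zero_zero]
  | succ n ih =>
    have hstep := (ih (shiftDown (n + 1) T)).sum_ge_X_mul_sum_lt (Finset.range (n + 2))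
    simp only [← pPoly_eq_erase_add_singleton] at hstep
    have htop (k : ℕ) (hk : k ∈ Finset.range (n + 2)) :=
      pPoly_succ_erase_one ⟨k, Finset.mem_range.1 hk⟩ T
    by_cases hT : 1 ∈ T
    · exact hstep.congr htop fun k hk ↦ pPoly_succ_singleton_one ⟨k, Finset.mem_range.1 hk⟩ hT
    · exact hstep.bot_zero.congr htop fun k _ ↦
        pPoly_eq_zero_of_not_subset (by rwa [Finset.singleton_subset_iff]) _ k

variable {n i j : ℕ} (T : Finset ℕ)

lemma realRooted_pPoly_top (hi : i ≤ n) : RealRooted (pPoly n i ∅ (T.erase 1)) :=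
  (interlacingRows_pPoly n T).realRooted_top (Finset.mem_range_succ_iff.2 hi)

lemma realRooted_pPoly_mid (hi : i ≤ n) : RealRooted (pPoly n i ∅ T) := by
  rw [pPoly_eq_erase_add_singleton]
  exact (interlacingRows_pPoly n T).realRooted_mid (Finset.mem_range_succ_iff.2 hi)

lemma realRooted_pPoly_bot (hi : i ≤ n) : RealRooted (pPoly n i {1} T) :=
  (interlacingRows_pPoly n T).realRooted_bot (Finset.mem_range_succ_iff.2 hi)

lemma interlaces_pPoly_top_top (hij : i ≤ j) (hj : j ≤ n) :
    Interlaces (pPoly n i ∅ (T.erase 1)) (pPoly n j ∅ (T.erase 1)) :=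
  ((interlacingRows_pPoly n T).top_top (by grind) (by grind) hij).interlaces
    (realRooted_pPoly_top T (hij.trans hj)) (realRooted_pPoly_top T hj)
    (leadingCoeff_pPoly_nonneg ..) (leadingCoeff_pPoly_nonneg ..)

lemma interlaces_pPoly_bot_bot (hij : i ≤ j) (hj : j ≤ n) :
    Interlaces (pPoly n i {1} T) (pPoly n j {1} T) :=
  ((interlacingRows_pPoly n T).bot_bot (by grind) (by grind) hij).interlaces
    (realRooted_pPoly_bot T (hij.trans hj)) (realRooted_pPoly_bot T hj)
    (leadingCoeff_pPoly_nonneg ..) (leadingCoeff_pPoly_nonneg ..)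

lemma interlaces_pPoly_top_bot (hi : i ≤ n) (hj : j ≤ n) :
    Interlaces (pPoly n i ∅ (T.erase 1)) (pPoly n j {1} T) :=
  ((interlacingRows_pPoly n T).top_bot (by grind) (by grind)).interlaces
    (realRooted_pPoly_top T hi) (realRooted_pPoly_bot T hj)
    (leadingCoeff_pPoly_nonneg ..) (leadingCoeff_pPoly_nonneg ..)

lemma interlaces_pPoly_mid_mid (hij : i ≤ j) (hj : j ≤ n) :
    Interlaces (pPoly n i ∅ T) (pPoly n j ∅ T) := by
  have hsector := (interlacingRows_pPoly n T).mid_mid (i := i) (j := j) (by grind) (by grind) hij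
  simp only [← pPoly_eq_erase_add_singleton] at hsector
  exact hsector.interlaces (realRooted_pPoly_mid T (hij.trans hj)) (realRooted_pPoly_mid T hj)
    (leadingCoeff_pPoly_nonneg ..) (leadingCoeff_pPoly_nonneg ..)

lemma interlaces_pPoly_top_mid (hij : i ≤ j) (hj : j ≤ n) :
    Interlaces (pPoly n i ∅ (T.erase 1)) (pPoly n j ∅ T) := by
  have hsector := (interlacingRows_pPoly n T).top_mid (i := i) (j := j) (by grind) (by grind) hij
  rw [← pPoly_eq_erase_add_singleton] at hsector
  exact hsector.interlaces (realRooted_pPoly_top T (hij.trans hj)) (realRooted_pPoly_mid T hj)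
    (leadingCoeff_pPoly_nonneg ..) (leadingCoeff_pPoly_nonneg ..)

lemma interlaces_pPoly_mid_bot (hij : i ≤ j) (hj : j ≤ n) :
    Interlaces (pPoly n i ∅ T) (pPoly n j {1} T) := by
  have hsector := (interlacingRows_pPoly n T).mid_bot (i := i) (j := j) (by grind) (by grind) hij
  rw [← pPoly_eq_erase_add_singleton] at hsector
  exact hsector.interlaces (realRooted_pPoly_mid T (hij.trans hj)) (realRooted_pPoly_bot T hj)
    (leadingCoeff_pPoly_nonneg ..) (leadingCoeff_pPoly_nonneg ..)

end DescentInterlacing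

theorem statement19_general (n : ℕ) (hn : 1 ≤ n) (T : Finset ℕ) :
    InterlacingSeq (fun k : Fin (n + 1) => pPoly n k ∅ (T.erase 1)) ∧
    InterlacingSeq (fun k : Fin (n + 1) => pPoly n k ∅ T) ∧
    InterlacingSeq (fun k : Fin (n + 1) => pPoly n k {1} T) ∧
    (∀ k ≤ n,
      Interlaces (pPoly n k ∅ (T.erase 1)) (pPoly n k ∅ T) ∧
      Interlaces (pPoly n k ∅ T) (pPoly n k {1} T) ∧
      Interlaces (pPoly n k ∅ (T.erase 1)) (pPoly n k {1} T)) ∧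
    Interlaces (pPoly n (n - 1) ∅ (T.erase 1)) (pPoly n 1 {1} T) ∧
    InterlacingSeq (fun i : Fin (2 * n) =>
      if (i : ℕ) < n then pPoly n i ∅ (T.erase 1)
      else pPoly n ((i : ℕ) - n + 1) {1} T) := by
  refine ⟨fun i j hij ↦ interlaces_pPoly_top_top T hij.le j.is_le,
    fun i j hij ↦ interlaces_pPoly_mid_mid T hij.le j.is_le,
    fun i j hij ↦ interlaces_pPoly_bot_bot T hij.le j.is_le,
    fun k hk ↦ ⟨interlaces_pPoly_top_mid T le_rfl hk, interlaces_pPoly_mid_bot T le_rfl hk,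
      interlaces_pPoly_top_bot T hk hk⟩,
    interlaces_pPoly_top_bot T (n.sub_le 1) hn, fun i j hij ↦ ?_⟩
  have hij' : (i : ℕ) < j := hij
  dsimp only
  split_ifs with hi hj
  · exact interlaces_pPoly_top_top T hij'.le hj.le
  · exact interlaces_pPoly_top_bot T hi.le (by omega)
  · omega
  · exact interlaces_pPoly_bot_bot T (by omega) (by omega)

theorem statement19 (n : ℕ) (hn : 2 ≤ n) (T : Finset ℕ)
    (hT : T = Finset.Icc 1 n ∨ T = Finset.Icc 1 (n - 1)) :
    InterlacingSeq (fun k : Fin (n + 1) => pPoly n k ∅ (T.erase 1)) ∧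
    InterlacingSeq (fun k : Fin (n + 1) => pPoly n k ∅ T) ∧
    InterlacingSeq (fun k : Fin (n + 1) => pPoly n k {1} T) ∧
    (∀ k ≤ n,
      Interlaces (pPoly n k ∅ (T.erase 1)) (pPoly n k ∅ T) ∧
      Interlaces (pPoly n k ∅ T) (pPoly n k {1} T) ∧
      Interlaces (pPoly n k ∅ (T.erase 1)) (pPoly n k {1} T)) ∧
    Interlaces (pPoly n (n - 1) ∅ (T.erase 1)) (pPoly n 1 {1} T) ∧
    InterlacingSeq (fun i : Fin (2 * n) =>
      if (i : ℕ) < n then pPoly n i ∅ (T.erase 1)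
      else pPoly n ((i : ℕ) - n + 1) {1} T) :=
  statement19_general n (one_le_two.trans hn) T
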